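/- Let n ≥ m ≥ 3 be integers and let X_1,…,X_n be real numbers with pairwise distinct values, with descending order statistics X_{n:n} > X_{n−1:n} > … > X_{1:n}. Define K_P(y_1,y_2,y_3) = 2 ln((y_1−y_2)/(y_2−y_3)) − ln((y_1−y_3)/(y_2−y_3)) and K_{P,m}(x_I) = K_P applied to the three largest values of x_I. Then the U-statistic U^m_{n,P} = C(n,m)^{−1} Σ_{I ⊂ [n], |I|=m} K_{P,m}(X_I) equals Σ_{j=2}^{n−m+3} [C(n−j, m−3)/C(n,m)] · (2(n−j+1)/(m−2) − j) · Σ_{i=1}^{j−1} ln(X_{n−i+1:n} − X_{n−j+1:n}). -/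

import Mathlib

open MeasureTheory ProbabilityTheory Filter Real Set Topology
open scoped ENNReal NNReal Classical

noncomputable section

/-- The `j`-th largest entry of the tuple `x` (`j = 0` gives the maximum, `j = 1` the
second largest, ...); `0` when `j` is out of range. -/
def descStat {m : ℕ} (x : Fin m → ℝ) (j : ℕ) : ℝ :=
  if h : j < m then (x ∘ Tuple.sort x) ⟨m - 1 - j, by omega⟩ else 0

/-- The kernel of degree `m` obtained from `K` by applying it to the top-`q`
(descending) order statistics: `K_m(x_1,…,x_m) = K(x_{m:m},…,x_{m−q+1:m})`. -/
def Km {q : ℕ} (K : (Fin q → ℝ) → ℝ) (m : ℕ) (x : Fin m → ℝ) : ℝ :=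
  K fun j => descStat x (j : ℕ)

/-- `K(a x_1 + b, …, a x_q + b) = K(x_1, …, x_q)` for all `a > 0`, `b ∈ ℝ`. -/
def LocScaleInvariant {q : ℕ} (K : (Fin q → ℝ) → ℝ) : Prop :=
  ∀ a b : ℝ, 0 < a → ∀ x : Fin q → ℝ, K (fun j => a * x j + b) = K x

/-- `h_γ(y) = (y^γ - 1)/γ`, interpreted as `log y` when `γ = 0`. -/
def hGamma (γ : ℝ) (y : ℝ) : ℝ := if γ = 0 then Real.log y else (y ^ γ - 1) / γ

lemma measurable_hGamma (γ : ℝ) : Measurable (hGamma γ) := by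
  unfold hGamma
  split_ifs
  · exact Real.measurable_log
  · fun_prop

/-- The uniform distribution on `(0,1)`. -/
def unif01 : Measure ℝ := volume.restrict (Set.Ioo (0:ℝ) 1)

instance : IsProbabilityMeasure unif01 := ⟨by simp [unif01]⟩

/-- The standard Pareto(1) distribution, with cdf `1 - 1/y` for `y ≥ 1`. -/
def pareto1 : Measure ℝ := ProbabilityTheory.paretoMeasure 1 1

instance : IsProbabilityMeasure pareto1 :=
  ProbabilityTheory.isProbabilityMeasure_paretoMeasure one_pos one_pos

/-- The standard generalized Pareto distribution `GP(γ)`: the law of `h_γ(Y)` for `Y`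
standard Pareto(1). -/
def gpMeasure (γ : ℝ) : Measure ℝ := pareto1.map (hGamma γ)

instance (γ : ℝ) : IsProbabilityMeasure (gpMeasure γ) :=
  Measure.isProbabilityMeasure_map (measurable_hGamma γ).aemeasurable

/-- The unit exponential distribution: the law of `-log U` for `U` uniform on `(0,1)`. -/
def expMeasure1 : Measure ℝ := unif01.map fun u => -Real.log u

instance : IsProbabilityMeasure expMeasure1 :=
  Measure.isProbabilityMeasure_map Real.measurable_log.neg.aemeasurable

/-- The Erlang(q) distribution: the law of the sum of `q` independent unit exponentials. -/
def erlangMeasure (q : ℕ) : Measure ℝ :=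
  (Measure.pi fun _ : Fin q => expMeasure1).map fun e => ∑ i, e i

instance (q : ℕ) : IsProbabilityMeasure (erlangMeasure q) :=
  Measure.isProbabilityMeasure_map
    (Finset.measurable_sum _ fun i _ => measurable_pi_apply i).aemeasurable

/-- The joint law of `r` iid `GP(γ)` random variables. -/
def gpPi (γ : ℝ) (r : ℕ) : Measure (Fin r → ℝ) := Measure.pi fun _ => gpMeasure γ

instance (γ : ℝ) (r : ℕ) : IsProbabilityMeasure (gpPi γ r) := by
  unfold gpPi; infer_instance

/-- The vector `(Z_{q-j:q-1})_{j=1}^{q}`: the descending order statistics of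
`z_1,…,z_{q-1}` with an extra last entry `Z_{0:q-1} := 0`. -/
def refVec {q : ℕ} (z : Fin (q-1) → ℝ) : Fin q → ℝ := fun j => descStat z (j : ℕ)

/-- `θ = E[K((Z_{q-j:q-1})_{j=1}^{q})]` for iid `GP(γ)` variables `Z_1,…,Z_{q-1}`. -/
def thetaK (γ : ℝ) {q : ℕ} (K : (Fin q → ℝ) → ℝ) : ℝ :=
  ∫ z, K (refVec z) ∂(gpPi γ (q-1))

/-- all moments of `K((Z_{q-j:q-1})_{j=1}^{q})` are finite. -/
def MomentCond (γ : ℝ) {q : ℕ} (K : (Fin q → ℝ) → ℝ) : Prop :=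
  ∀ p : ℝ, 0 < p →
    ∫⁻ z, ENNReal.ofReal (|K (refVec z)| ^ p) ∂(gpPi γ (q-1)) < ⊤

/-- The asymptotic variance
`σ²_K(γ) = ∫_0^∞ (E[K̄_{q+1}((Z_{q-j:q-1})_{j=1}^q, h_γ(S_q/x))])² dx`. -/
def sigmaSqK (γ : ℝ) {q : ℕ} (K : (Fin q → ℝ) → ℝ) : ℝ :=
  ∫ x in Set.Ioi (0:ℝ),
    (∫ zs : (Fin (q-1) → ℝ) × ℝ,
        (Km K (q+1) (Fin.snoc (refVec zs.1) (hGamma γ (zs.2 / x))) - thetaK γ K)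
      ∂((gpPi γ (q-1)).prod (erlangMeasure q))) ^ 2

/-- The U-statistic with kernel `K_m` evaluated on the sample `z`. -/
def UStat {q : ℕ} (K : (Fin q → ℝ) → ℝ) (m n : ℕ) (z : Fin n → ℝ) : ℝ :=
  ((n.choose m : ℝ))⁻¹ *
    ∑ I ∈ Finset.powersetCard m (Finset.univ : Finset (Fin n)),
      Km K I.card fun j => z (I.orderIsoOfFin rfl j).1

/-- Condition on the degree sequence: `m = o(n^{1-ε})` and `log n = o(m^{1-δ})`. -/
def DegreeCond (m : ℕ → ℕ) : Prop :=
  ∃ ε > (0:ℝ), ∃ δ > (0:ℝ),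
    Tendsto (fun n => (m n : ℝ) / (n : ℝ) ^ (1 - ε)) atTop (𝓝 0) ∧
    Tendsto (fun n : ℕ => Real.log n / (m n : ℝ) ^ (1 - δ)) atTop (𝓝 0)

/-- `ζ_{m,ℓ} = cov(K_m(Z_S), K_m(Z_{S'}))` for the blocks `S = [1:m]`,
`S' = [(m-ℓ+1):(2m-ℓ)]` (zero-indexed here), which overlap in `ℓ` indices. -/
def zetaCov {Ω : Type*} [MeasurableSpace Ω] (P : Measure Ω) {q : ℕ}
    (K : (Fin q → ℝ) → ℝ) (Z : ℕ → Ω → ℝ) (m ℓ : ℕ) : ℝ :=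
  (∫ ω, Km K m (fun i : Fin m => Z i ω) * Km K m (fun i : Fin m => Z (m - ℓ + i) ω) ∂P)
    - (∫ ω, Km K m (fun i : Fin m => Z i ω) ∂P)
      * (∫ ω, Km K m (fun i : Fin m => Z (m - ℓ + i) ω) ∂P)

/-- Convergence in distribution to a Gaussian, expressed via pointwise convergence of
the cumulative distribution functions (the Gaussian cdf being continuous). -/
def TendstoGaussian {Ω : Type*} [MeasurableSpace Ω] (P : Measure Ω)
    (T : ℕ → Ω → ℝ) (μ : ℝ) (v : ℝ≥0) : Prop :=
  ∀ x : ℝ, Tendsto (fun n => (P {ω | T n ω ≤ x}).toReal) atTop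
    (𝓝 ((gaussianReal μ v (Set.Iic x)).toReal))

/-- Convergence in probability to the constant `c`. -/
def TendstoInProb {Ω : Type*} [MeasurableSpace Ω] (P : Measure Ω)
    (T : ℕ → Ω → ℝ) (c : ℝ) : Prop :=
  ∀ ε : ℝ, 0 < ε → Tendsto (fun n => (P {ω | ε ≤ |T n ω - c|}).toReal) atTop (𝓝 0)


/-- The Pickands kernel in its two-term form
`K_P(y₁,y₂,y₃) = 2 ln((y₁-y₂)/(y₂-y₃)) - ln((y₁-y₃)/(y₂-y₃))`. -/
def KP2 : (Fin 3 → ℝ) → ℝ :=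
  fun y => 2 * Real.log ((y 0 - y 1) / (y 1 - y 2)) - Real.log ((y 0 - y 2) / (y 1 - y 2))

/-- step: peel off the minimum -/
lemma peel {α : Type*} [LinearOrder α] (A : Finset α) (k : ℕ) (F : Finset α → ℝ) :
    ∑ S ∈ Finset.powersetCard (k+1) A, F S =
      ∑ a ∈ A, ∑ T ∈ Finset.powersetCard k (A.filter (fun t => a < t)), F (insert a T) := by
  induction A using Finset.induction_on_min with
  | empty => rw [Finset.powersetCard_eq_empty.2 (by simp)]; simp
  | insert a s h ih =>
    have ha : a ∉ s := fun h' => lt_irrefl _ (h a h')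
    rw [Finset.powersetCard_succ_insert ha, Finset.sum_union, Finset.sum_insert ha, ih,
      Finset.sum_image, add_comm]
    · congr 1
      · congr 2
        ext t
        simp only [Finset.mem_filter, Finset.mem_insert]
        constructor
        · intro ht; exact ⟨Or.inr ht, h t ht⟩
        · rintro ⟨rfl | ht, h2⟩
          · exact absurd h2 (lt_irrefl _)
          · exact ht
      · refine Finset.sum_congr rfl fun b hb => ?_
        rw [Finset.filter_insert, if_neg (not_lt.mpr (h b hb).le)]
    · intro S hS T hT hST
      have h1 : a ∉ S := fun h' => ha ((Finset.mem_powersetCard.1 hS).1 h')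
      have h2 : a ∉ T := fun h' => ha ((Finset.mem_powersetCard.1 hT).1 h')
      rw [← Finset.erase_insert h1, ← Finset.erase_insert h2, hST]
    · rw [Finset.disjoint_left]
      intro S hS hS'
      obtain ⟨T, _, rfl⟩ := Finset.mem_image.1 hS'
      exact ha ((Finset.mem_powersetCard.1 hS).1 (Finset.mem_insert_self _ _))

lemma descStat_strict {m : ℕ} (x : Fin m → ℝ) (hx : Function.Injective x) {i j : ℕ}
    (hij : i < j) (hj : j < m) : descStat x j < descStat x i := by
  have hs : StrictMono (x ∘ Tuple.sort x) :=
    (Tuple.monotone_sort x).strictMono_of_injective (hx.comp (Tuple.sort x).injective)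
  unfold descStat
  rw [dif_pos hj, dif_pos (hij.trans hj)]
  apply hs
  rw [Fin.mk_lt_mk]
  omega

lemma descStat_mem {m : ℕ} (x : Fin m → ℝ) {j : ℕ} (hj : j < m) : ∃ i, x i = descStat x j := by
  unfold descStat
  rw [dif_pos hj]
  exact ⟨_, rfl⟩

lemma descStat_surj {m : ℕ} (x : Fin m → ℝ) (i : Fin m) : ∃ j < m, descStat x j = x i := by
  refine ⟨m - 1 - ((Tuple.sort x).symm i), by have := i.2; omega, ?_⟩
  unfold descStat
  have h := ((Tuple.sort x).symm i).2
  rw [dif_pos (by omega)]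
  have : (⟨m - 1 - (m - 1 - ((Tuple.sort x).symm i : ℕ)), by omega⟩ : Fin m)
    = (Tuple.sort x).symm i := by
    apply Fin.ext
    simp only
    omega
  rw [this]
  simp

lemma top3 {m : ℕ} (hm : 3 ≤ m) (x : Fin m → ℝ) (hx : Function.Injective x) (u v w : ℝ)
    (hu : ∃ i, x i = u) (hv : ∃ i, x i = v) (hw : ∃ i, x i = w) (hvu : v < u) (hwv : w < v)
    (h : ∀ i, x i = u ∨ x i = v ∨ x i = w ∨ x i < w) :
    descStat x 0 = u ∧ descStat x 1 = v ∧ descStat x 2 = w := by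
  have key : ∀ z, (∃ i, x i = z) → ∃ j < m, descStat x j = z := by
    rintro z ⟨i, rfl⟩
    exact descStat_surj x i
  have h' : ∀ j < m, descStat x j = u ∨ descStat x j = v ∨ descStat x j = w ∨ descStat x j < w := by
    intro j hj
    obtain ⟨i, hi⟩ := descStat_mem x hj
    rw [← hi]; exact h i
  have hs : ∀ i j, i < j → j < m → descStat x j < descStat x i :=
    fun i j hij hj => descStat_strict x hx hij hj
  obtain ⟨i, hi, hi'⟩ := key u hu
  obtain ⟨j, hj, hj'⟩ := key v hv
  obtain ⟨k, hk, hk'⟩ := key w hw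
  have i0 : i = 0 := by
    by_contra hne
    have h1 := hs 0 i (by omega) hi
    rcases h' 0 (by omega) with h2 | h2 | h2 | h2 <;> linarith
  subst i0
  have j0 : j ≠ 0 := by rintro rfl; linarith
  have j1 : j = 1 := by
    by_contra hne
    have h1 := hs 1 j (by omega) hj
    have h3 := hs 0 1 (by omega) (by omega)
    rcases h' 1 (by omega) with h2 | h2 | h2 | h2 <;> linarith
  subst j1
  have k0 : k ≠ 0 := by rintro rfl; linarith
  have k1 : k ≠ 1 := by rintro rfl; linarith
  have k2 : k = 2 := by
    by_contra hne
    have h1 := hs 2 k (by omega) hk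
    have h3 := hs 1 2 (by omega) (by omega)
    rcases h' 2 (by omega) with h2 | h2 | h2 | h2 <;> linarith
  subst k2
  exact ⟨hi', hj', hk'⟩

/-- the descending sorting permutation -/
def descPerm {n : ℕ} (X : Fin n → ℝ) : Equiv.Perm (Fin n) := Fin.revPerm.trans (Tuple.sort X)

lemma descPerm_apply {n : ℕ} (X : Fin n → ℝ) (k : Fin n) : X (descPerm X k) = descStat X k := by
  unfold descStat descPerm
  rw [dif_pos k.2]
  simp only [Equiv.trans_apply, Fin.revPerm_apply, Function.comp]
  congr 2
  apply Fin.ext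
  simp [Fin.val_rev]
  omega

lemma KP2_eq (y : Fin 3 → ℝ) (h1 : y 1 < y 0) (h2 : y 2 < y 1) :
    KP2 y = 2 * Real.log (y 0 - y 1) - Real.log (y 0 - y 2) - Real.log (y 1 - y 2) := by
  unfold KP2
  rw [Real.log_div (by linarith) (by linarith), Real.log_div (by linarith) (by linarith)]
  ring

lemma Km_eval {n m : ℕ} (hm : 3 ≤ m) (X : Fin n → ℝ) (hX : Function.Injective X) (a b c : Fin n)
    (T : Finset (Fin n)) (hab : a < b) (hbc : b < c) (hT : ∀ t ∈ T, c < t) (hc : T.card = m - 3)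
    (I : Finset (Fin n)) (hI : I = (insert a (insert b (insert c T))).map (descPerm X).toEmbedding) :
    Km KP2 I.card (fun j => X (I.orderIsoOfFin rfl j).1) =
      2 * Real.log (descStat X a - descStat X b) - Real.log (descStat X a - descStat X c)
        - Real.log (descStat X b - descStat X c) := by
  have hab' := descStat_strict X hX hab b.2
  have hbc' := descStat_strict X hX hbc c.2
  have hcard : 3 ≤ I.card := by
    rw [hI, Finset.card_map, Finset.card_insert_of_notMem, Finset.card_insert_of_notMem,
      Finset.card_insert_of_notMem]
    · omega
    · intro h; exact lt_irrefl _ (hT _ h)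
    · simp only [Finset.mem_insert, not_or]
      exact ⟨hbc.ne, fun h => lt_asymm hbc (hT _ h)⟩
    · simp only [Finset.mem_insert, not_or]
      exact ⟨hab.ne, (hab.trans hbc).ne, fun h => lt_asymm (hab.trans hbc) (hT _ h)⟩
  have hmem : ∀ k ∈ insert a (insert b (insert c T)),
      ∃ i, X (I.orderIsoOfFin rfl i).1 = descStat X k := by
    intro k hk
    have : descPerm X k ∈ I := by
      rw [hI]; exact Finset.mem_map_of_mem _ hk
    refine ⟨(I.orderIsoOfFin rfl).symm ⟨_, this⟩, ?_⟩
    rw [OrderIso.apply_symm_apply]; exact descPerm_apply X k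
  obtain ⟨h0, h1, h2⟩ := top3 hcard (fun j => X (I.orderIsoOfFin rfl j).1)
    (hX.comp (Subtype.val_injective.comp (I.orderIsoOfFin rfl).injective))
    (descStat X a) (descStat X b) (descStat X c) (hmem a (by simp)) (hmem b (by simp))
    (hmem c (by simp)) hab' hbc' (by
      intro i
      have hi := (I.orderIsoOfFin rfl i).2
      set z := (I.orderIsoOfFin rfl i).1
      rw [hI, Finset.mem_map] at hi
      obtain ⟨k, hk, hk'⟩ := hi
      have hz : X z = descStat X k := by rw [← hk']; exact descPerm_apply X k
      simp only [hz]
      simp only [Finset.mem_insert] at hk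
      rcases hk with rfl | rfl | rfl | hk
      · simp
      · simp
      · simp
      · exact Or.inr (Or.inr (Or.inr (descStat_strict X hX (hT k hk) k.2))))
  unfold Km
  rw [KP2_eq]
  · simp only [Fin.val_zero, Fin.val_one, Fin.val_two, h0, h1, h2]
  · simp only [Fin.val_zero, Fin.val_one, h0, h1]; exact hab'
  · simp only [Fin.val_one, Fin.val_two, h1, h2]; exact hbc'

lemma sum_fin (n m : ℕ) (hm : 3 ≤ m) (X : Fin n → ℝ) (hX : Function.Injective X) :
    ∑ I ∈ Finset.powersetCard m (Finset.univ : Finset (Fin n)),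
      Km KP2 I.card (fun j => X (I.orderIsoOfFin rfl j).1) =
    ∑ a : Fin n, ∑ b : Fin n, ∑ c : Fin n, if a < b ∧ b < c then
      ((n - 1 - (c : ℕ)).choose (m - 3) : ℝ) * (2 * Real.log (descStat X a - descStat X b)
        - Real.log (descStat X a - descStat X c) - Real.log (descStat X b - descStat X c)) else 0 := by
  have hu : (Finset.univ : Finset (Fin n)) = Finset.univ.map (descPerm X).toEmbedding := by simp
  conv_lhs => rw [hu]
  rw [Finset.powersetCard_map, Finset.sum_map]
  obtain ⟨k, rfl⟩ := Nat.exists_eq_add_of_le' hm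
  rw [peel]
  refine Finset.sum_congr rfl fun a _ => ?_
  rw [peel, Finset.sum_filter]
  refine Finset.sum_congr rfl fun b _ => ?_
  by_cases hab : a < b
  swap
  · simp [hab]
  rw [if_pos hab, peel, Finset.filter_filter, Finset.sum_filter]
  refine Finset.sum_congr rfl fun c _ => ?_
  by_cases hbc : b < c
  swap
  · simp [hbc]
  rw [if_pos ⟨hab.trans hbc, hbc⟩, if_pos ⟨hab, hbc⟩]
  have hf : ((Finset.univ.filter (fun t => a < t ∧ b < t)).filter (fun t => c < t))
      = Finset.Ioi c := by
    ext t
    simp only [Finset.mem_filter, Finset.mem_univ, true_and, Finset.mem_Ioi]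
    exact ⟨fun h => h.2, fun h => ⟨⟨(hab.trans hbc).trans h, hbc.trans h⟩, h⟩⟩
  rw [hf]
  have hk : k + 3 - 3 = k := by omega
  rw [Finset.sum_congr rfl (g := fun _ => 2 * Real.log (descStat X a - descStat X b)
        - Real.log (descStat X a - descStat X c) - Real.log (descStat X b - descStat X c))]
  · rw [Finset.sum_const, Finset.card_powersetCard, Fin.card_Ioi, nsmul_eq_mul, hk]
  · intro T hT
    rw [Finset.mem_powersetCard] at hT
    exact Km_eval hm X hX a b c T hab hbc (fun t ht => Finset.mem_Ioi.1 (hT.1 ht)) (by omega) _ rfl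

lemma range_filter_lt {n k : ℕ} (h : k ≤ n) (f : ℕ → ℝ) :
    ∑ i ∈ Finset.range n, (if i < k then f i else 0) = ∑ i ∈ Finset.range k, f i := by
  rw [← Finset.sum_filter]
  congr 1
  ext t
  simp only [Finset.mem_filter, Finset.mem_range]
  omega

lemma sum_nat (n : ℕ) (f : ℕ → ℕ → ℕ → ℝ) :
    (∑ a : Fin n, ∑ b : Fin n, ∑ c : Fin n, if a < b ∧ b < c then f a b c else 0) =
    ∑ c ∈ Finset.range n, ∑ b ∈ Finset.range c, ∑ a ∈ Finset.range b, f a b c := by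
  have e1 : (∑ a : Fin n, ∑ b : Fin n, ∑ c : Fin n, if a < b ∧ b < c then f a b c else 0) =
      ∑ c : Fin n, ∑ b : Fin n, ∑ a : Fin n, if a < b ∧ b < c then f a b c else 0 := by
    rw [Finset.sum_comm]
    rw [Finset.sum_congr rfl fun b _ => Finset.sum_comm]
    rw [Finset.sum_comm]
  rw [e1]
  simp only [Fin.lt_def]
  rw [Fin.sum_univ_eq_sum_range (fun c => ∑ b : Fin n, ∑ a : Fin n,
    if (a : ℕ) < b ∧ (b : ℕ) < c then f a b c else 0) n]
  refine Finset.sum_congr rfl fun c hc => ?_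
  rw [Finset.mem_range] at hc
  rw [Fin.sum_univ_eq_sum_range (fun b => ∑ a : Fin n,
    if (a : ℕ) < b ∧ b < c then f a b c else 0) n, ← range_filter_lt hc.le]
  refine Finset.sum_congr rfl fun b hb => ?_
  rw [Finset.mem_range] at hb
  rw [Fin.sum_univ_eq_sum_range (fun a => if a < b ∧ b < c then f a b c else 0) n]
  split_ifs with h
  · simp only [h, and_true]
    exact range_filter_lt hb.le _
  · simp [h]

lemma sum_pair (k : ℕ) (g : ℕ → ℝ) :
    ∑ b ∈ Finset.range k, ∑ a ∈ Finset.range b, (g a + g b) =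
      ((k : ℝ) - 1) * ∑ a ∈ Finset.range k, g a := by
  induction k with
  | zero => simp
  | succ k ih =>
    rw [Finset.sum_range_succ, ih, Finset.sum_range_succ, Finset.sum_add_distrib]
    simp only [Finset.sum_const, Finset.card_range, nsmul_eq_mul]
    push_cast
    ring

lemma hockey (q : ℕ) (H : ℕ → ℝ) (n : ℕ) :
    ∑ c ∈ Finset.range n, ∑ b ∈ Finset.range c, ((n - 1 - c).choose q : ℝ) * H b =
      ∑ b ∈ Finset.range n, ((n - 1 - b).choose (q + 1) : ℝ) * H b := by
  induction n generalizing H with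
  | zero => simp
  | succ n ih =>
    rw [Finset.sum_range_succ', Finset.sum_range_succ']
    simp only [Finset.sum_range_succ', Finset.sum_add_distrib]
    have h1 : ∀ c, n + 1 - 1 - (c + 1) = n - 1 - c := fun c => by omega
    simp only [h1, ih (fun b => H (b + 1)), Finset.range_zero, Finset.sum_empty, add_zero]
    congr 1
    rw [← Finset.sum_mul, Nat.add_sub_cancel, Nat.sub_zero]
    congr 1
    rw [Finset.sum_range_reflect (fun i => (i.choose q : ℝ)) n]
    clear ih h1
    induction n with
    | zero => simp
    | succ n ih => rw [Finset.sum_range_succ, ih, Nat.choose_succ_succ]; push_cast; ring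

lemma coef (N q j : ℕ) : 2 * (N.choose (q + 1) : ℝ) - ((j : ℝ) - 1) * (N.choose q : ℝ)
    = (N.choose q : ℝ) * (2 * ((N : ℝ) + 1) / ((q : ℝ) + 1) - ((j : ℝ) + 1)) := by
  have h : (N.choose (q + 1) : ℝ) * (q + 1) = N.choose q * ((N : ℝ) - q) := by
    rcases le_or_gt q N with hq | hq
    · have := Nat.choose_succ_right_eq N q
      rw [← Nat.cast_sub hq]
      exact_mod_cast this
    · rw [Nat.choose_eq_zero_of_lt hq, Nat.choose_eq_zero_of_lt (by omega)]
      simp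
  have hq : (q : ℝ) + 1 ≠ 0 := by positivity
  field_simp
  linear_combination 2 * h

lemma main_sum (n q : ℕ) (L : ℕ → ℕ → ℝ) :
    ∑ c ∈ Finset.range n, ∑ b ∈ Finset.range c, ∑ a ∈ Finset.range b,
      ((n - 1 - c).choose q : ℝ) * (2 * L a b - L a c - L b c) =
    ∑ j ∈ Finset.range n, ((n - 1 - j).choose q : ℝ) *
      (2 * ((n : ℝ) - j) / ((q : ℝ) + 1) - ((j : ℝ) + 1)) * ∑ i ∈ Finset.range j, L i j := by
  have e : ∀ c, ∑ b ∈ Finset.range c, ∑ a ∈ Finset.range b,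
      ((n - 1 - c).choose q : ℝ) * (2 * L a b - L a c - L b c) =
      (∑ b ∈ Finset.range c, ((n - 1 - c).choose q : ℝ) * (2 * ∑ a ∈ Finset.range b, L a b)) -
      ((n - 1 - c).choose q : ℝ) * (((c : ℝ) - 1) * ∑ a ∈ Finset.range c, L a c) := by
    intro c
    rw [← sum_pair c (fun a => L a c), Finset.mul_sum, ← Finset.sum_sub_distrib]
    refine Finset.sum_congr rfl fun b _ => ?_
    rw [Finset.mul_sum, Finset.mul_sum, Finset.mul_sum, ← Finset.sum_sub_distrib]
    refine Finset.sum_congr rfl fun a _ => ?_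
    ring
  simp only [e]
  rw [Finset.sum_sub_distrib, hockey q (fun b => 2 * ∑ a ∈ Finset.range b, L a b),
    ← Finset.sum_sub_distrib]
  refine Finset.sum_congr rfl fun j hj => ?_
  rw [Finset.mem_range] at hj
  have h := coef (n - 1 - j) q j
  have hN : ((n - 1 - j : ℕ) : ℝ) + 1 = (n : ℝ) - j := by
    rw [← Nat.cast_sub hj.le]
    norm_cast
    omega
  rw [hN] at h
  rw [← h]
  ring

/-- Lemma: explicit formula for the extreme U-Pickands statistic.
For pairwise distinct reals `X_1,…,X_n` and `3 ≤ m ≤ n`,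
`U^m_{n,P} = Σ_{j=2}^{n-m+3} [C(n-j,m-3)/C(n,m)] (2(n-j+1)/(m-2) - j)
  Σ_{i=1}^{j-1} ln(X_{n-i+1:n} - X_{n-j+1:n})`. -/
theorem pickands_U_statistic_explicit
    (n m : ℕ) (hm : 3 ≤ m) (hmn : m ≤ n)
    (X : Fin n → ℝ) (hX : Function.Injective X) :
    UStat KP2 m n X =
      ∑ j ∈ Finset.Icc 2 (n - m + 3),
        (((n - j).choose (m - 3) : ℝ) / (n.choose m : ℝ)) *
          (2 * ((n : ℝ) - (j : ℝ) + 1) / ((m : ℝ) - 2) - (j : ℝ)) *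
          ∑ i ∈ Finset.Icc 1 (j - 1),
            Real.log (descStat X (i - 1) - descStat X (j - 1)) := by
  unfold UStat
  rw [sum_fin n m hm X hX]
  rw [sum_nat n (fun a b c => ((n - 1 - c).choose (m - 3) : ℝ) *
    (2 * Real.log (descStat X a - descStat X b)
        - Real.log (descStat X a - descStat X c) - Real.log (descStat X b - descStat X c)))]
  rw [main_sum n (m - 3) (fun a b => Real.log (descStat X a - descStat X b)), Finset.mul_sum]
  have hsub : Finset.Icc 2 (n - m + 3) ⊆ Finset.Icc 1 n := by
    intro j
    simp only [Finset.mem_Icc]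
    omega
  rw [Finset.sum_subset hsub]
  · rw [← Finset.Ico_succ_right_eq_Icc, Finset.sum_Ico_eq_sum_range]
    refine Finset.sum_congr (by simp) fun j hj => ?_
    have h1 : n - (1 + j) = n - 1 - j := by omega
    have h2 : 1 + j - 1 = j := by omega
    have h3 : ((m - 3 : ℕ) : ℝ) + 1 = (m : ℝ) - 2 := by
      rw [Nat.cast_sub hm]; push_cast; ring
    have h4 : ∑ i ∈ Finset.Icc 1 j, Real.log (descStat X (i - 1) - descStat X j)
        = ∑ i ∈ Finset.range j, Real.log (descStat X i - descStat X j) := by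
      rw [← Finset.Ico_succ_right_eq_Icc, Finset.sum_Ico_eq_sum_range]
      refine Finset.sum_congr (by simp) fun i _ => ?_
      rw [Nat.add_sub_cancel_left]
    rw [h1, h2, h3, h4]
    push_cast
    ring
  · intro j hj hj'
    simp only [Finset.mem_Icc] at hj hj'
    rcases Nat.lt_or_ge j 2 with h | h
    · have : j = 1 := by omega
      subst this
      simp
    · rw [Nat.choose_eq_zero_of_lt (by omega : n - j < m - 3)]
      simp

end
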